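/- Let L be a first-order language and T a model complete L-theory. If T has a model whose complete theory has the strict order property, then the theory T_σ has no model companion. -/

import Mathlib

universe u v w

open FirstOrder Language Structure

/-- The language with a single unary function symbol `σ` and no other symbols. -/
def unaryFunctionLanguage : FirstOrder.Language.{0, 0} where
  Functions := fun n => match n with
    | 1 => Unit
    | _ => Empty
  Relations := fun _ => Empty

/-- `L_σ`: the language `L` expanded by one new unary function symbol `σ`. -/
abbrev Lsigma (L : FirstOrder.Language.{u, v}) : FirstOrder.Language :=
  L.sum unaryFunctionLanguage

/-- The interpretation of the new unary function symbol `σ` in an `L_σ`-structure. -/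
def sigmaMap (L : FirstOrder.Language.{u, v}) (M : Type w) [(Lsigma L).Structure M] :
    M → M :=
  fun x => funMap (L := Lsigma L) (M := M)
    ((Sum.inr () : L.Functions 1 ⊕ unaryFunctionLanguage.Functions 1)) ![x]

/-- `M` is a model of `T_σ = T ∪ {"σ is an L-automorphism"}`: the `L`-reduct of `M`
models `T` and the interpretation of `σ` is an `L`-automorphism of the reduct
(a bijection preserving every atomic `L`-formula in both directions). -/
def IsModelOfTsigma (L : FirstOrder.Language.{u, v}) (T : L.Theory) (M : Type w)
    [(Lsigma L).Structure M] : Prop :=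
  letI : L.Structure M := (LHom.sumInl (L := L) (L' := unaryFunctionLanguage)).reduct M
  M ⊨ T ∧ ∃ e : M ≃[L] M, ⇑e = sigmaMap L M

/-- An embedding between structures is elementary if it preserves the realization of all
first-order formulas. -/
def Embedding.IsElem {L' : FirstOrder.Language.{u2, v2}} {M N : Type*} [L'.Structure M]
    [L'.Structure N] (f : M ↪[L'] N) : Prop :=
  ∀ {n : ℕ} (φ : L'.Formula (Fin n)) (x : Fin n → M), φ.Realize (⇑f ∘ x) ↔ φ.Realize x

/-- A theory is model complete if every embedding between its models is elementary. -/
def TheoryIsModelComplete (L' : FirstOrder.Language.{u2, v2}) (T' : L'.Theory) : Prop :=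
  ∀ (M N : Type (max u2 v2)) [L'.Structure M] [L'.Structure N],
    M ⊨ T' → N ⊨ T' → ∀ f : M ↪[L'] N, Embedding.IsElem f

/-!
Write `<` for the relation defined by `φ`, and let `ψ(x, y)` say that some `z` satisfies
`x < z < y` and `σ z < z`. Suppose that `T_σ` has a model companion `TA`. Since `T` is model
complete, every model of `TA` is a model of `T_σ`, and embeddings between models of `T_σ` are
elementary for `L`.

Iterated ultrapowers along `ℤ` by a nonprincipal ultrafilter on `ℕ` carry the automorphism induced
by a translation of `ℤ`. Translating by `1` turns the given chain into a tuple `c < σ c` in a model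
of `T_σ`, hence in a model `N` of `TA`. There `ψ(c, σⁿ c)` fails for every `n`: from `c < z` and
`σ z < z` follows `σⁿ c < z`. So in an elementary extension of `N` there is a `b` above all `σⁿ c`
for which `ψ(c, b)` fails. On the other hand, translating by `-1` places between the `σⁿ c` and `b`
a tuple `z` with `σ z < z` in some larger model of `T_σ`, and `ψ(c, b)` descends from it because
models of `TA` are existentially closed.
-/

section IsFinitary

variable {I J : Type*} {β γ : Type*}

/-- A function of the sequence `s : I → J` is finitary if it depends on finitely many coordinates of
`s` only. -/
def IsFinitary (f : (I → J) → β) : Prop :=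
  ∃ D : Finset I, DependsOn f D

theorem isFinitary_const (b : β) : IsFinitary fun _ : I → J => b :=
  ⟨∅, fun _ _ _ => rfl⟩

theorem isFinitary_apply (p : I) : IsFinitary fun s : I → J => s p :=
  ⟨{p}, fun _ _ hst => hst p (by simp)⟩

theorem IsFinitary.comp_left {f : (I → J) → β} (hf : IsFinitary f) (g : β → γ) :
    IsFinitary fun s => g (f s) :=
  let ⟨D, hD⟩ := hf
  ⟨D, fun _ _ hst => congrArg g (hD hst)⟩

theorem isFinitary_pi {ι : Type*} [Finite ι] {f : ι → (I → J) → β} (hf : ∀ i, IsFinitary (f i)) :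
    IsFinitary fun s i => f i s := by
  classical
  have := Fintype.ofFinite ι
  choose D hD using hf
  exact ⟨Finset.univ.biUnion D, fun s t hst => funext fun i => hD i fun p hp =>
    hst p (Finset.mem_coe.2 (Finset.mem_biUnion.2 ⟨i, Finset.mem_univ i, hp⟩))⟩

theorem dependsOn_comp_equiv {I' : Type*} {f : (I → J) → β} {D : Finset I} (hf : DependsOn f D)
    (e : I ≃ I') : DependsOn (fun s : I' → J => f (s ∘ e)) (D.map e.toEmbedding) :=
  fun _ _ hst => hf fun p hp => hst (e p) (by simpa using hp)

theorem IsFinitary.comp_equiv {I' : Type*} {f : (I → J) → β} (hf : IsFinitary f) (e : I ≃ I') :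
    IsFinitary fun s : I' → J => f (s ∘ e) :=
  let ⟨D, hD⟩ := hf
  ⟨D.map e.toEmbedding, dependsOn_comp_equiv hD e⟩

end IsFinitary

section IteratedUltrafilter

variable {I J : Type*} [DecidableEq I] (U : Ultrafilter J)

/-- Choosing the coordinates listed in `l` along `U`, one after the other:
`∀ᶠ t in iterateUltrafilter U [p₁, …, pₙ] s, S t` means `∀ᶠ i₁ in U, …, ∀ᶠ iₙ in U, S t`, where `t`
is `s` with the value at each `pₘ` replaced by `iₘ`. -/
def iterateUltrafilter : List I → (I → J) → Ultrafilter (I → J)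
  | [], s => pure s
  | p :: l, s => U.bind fun i => iterateUltrafilter l (Function.update s p i)

theorem eventually_iterateUltrafilter_nil {s : I → J} {S : (I → J) → Prop} :
    (∀ᶠ t in iterateUltrafilter U [] s, S t) ↔ S s :=
  Iff.rfl

theorem eventually_iterateUltrafilter_cons {p : I} {l : List I} {s : I → J}
    {S : (I → J) → Prop} :
    (∀ᶠ t in iterateUltrafilter U (p :: l) s, S t) ↔
      ∀ᶠ i in U, ∀ᶠ t in iterateUltrafilter U l (Function.update s p i), S t :=
  Iff.rfl

theorem eventually_iterateUltrafilter_congr_base {S : (I → J) → Prop} {D : Set I}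
    (hS : DependsOn S D) {l : List I} {s s' : I → J} (h : ∀ p ∈ D, p ∉ l → s p = s' p) :
    (∀ᶠ t in iterateUltrafilter U l s, S t) ↔ ∀ᶠ t in iterateUltrafilter U l s', S t := by
  induction l generalizing s s' with
  | nil => exact iff_of_eq (hS fun p hp => h p hp List.not_mem_nil)
  | cons q l ih =>
    refine Filter.eventually_congr (.of_forall fun i => ih fun p hpD hpl => ?_)
    by_cases hpq : p = q
    · simp [hpq]
    · simpa [hpq] using h p hpD (by simp [hpq, hpl])

theorem eventually_iterateUltrafilter_filter {S : (I → J) → Prop} {D : Finset I}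
    (hS : DependsOn S D) (l : List I) (s : I → J) :
    (∀ᶠ t in iterateUltrafilter U (l.filter (· ∈ D)) s, S t) ↔
      ∀ᶠ t in iterateUltrafilter U l s, S t := by
  induction l generalizing s with
  | nil => rfl
  | cons q l ih =>
    by_cases hq : q ∈ D
    · rw [List.filter_cons_of_pos (by simpa using hq)]
      exact Filter.eventually_congr (.of_forall fun i => ih _)
    · rw [List.filter_cons_of_neg (by simpa using hq), eventually_iterateUltrafilter_cons]
      have hupdate (i : J) : (∀ᶠ t in iterateUltrafilter U l (Function.update s q i), S t) ↔
          ∀ᶠ t in iterateUltrafilter U (l.filter (· ∈ D)) s, S t := by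
        rw [ih, eventually_iterateUltrafilter_congr_base U hS]
        intro p hpD _
        exact Function.update_of_ne (ne_of_mem_of_not_mem (Finset.mem_coe.1 hpD) hq) _ _
      simp only [hupdate, Filter.eventually_const]

theorem eventually_iterateUltrafilter_map {I' : Type*} [DecidableEq I'] (e : I ≃ I') (l : List I)
    (s : I' → J) {S : (I' → J) → Prop} :
    (∀ᶠ t in iterateUltrafilter U (l.map e) s, S t) ↔
      ∀ᶠ t in iterateUltrafilter U l (s ∘ e), S (t ∘ e.symm) := by
  induction l generalizing s with
  | nil => simp [eventually_iterateUltrafilter_nil, Function.comp_assoc]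
  | cons p l ih =>
    simp only [List.map_cons, eventually_iterateUltrafilter_cons, ih,
      Function.update_comp_eq_of_injective s e.injective]

end IteratedUltrafilter

section PowerUltrafilter

variable {I J : Type*} [LinearOrder I] (U : Ultrafilter J)

theorem filter_mem_sort {D E : Finset I} (hDE : D ⊆ E) : E.sort.filter (· ∈ D) = D.sort := by
  have hset : (E.sort.filter (· ∈ D)).toFinset = D := by
    ext p
    simpa using fun hp => hDE hp
  rw [← (List.toFinset_sort (· ≤ ·) ((E.sort_nodup (· ≤ ·)).filter _)).2
    ((E.pairwise_sort (· ≤ ·)).filter _), hset]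

/-- The power of `U` along the linear order `I`: on sets depending on finitely many coordinates
`p₁ < ⋯ < pₙ` it is the iterated limit `∀ᶠ i₁ in U, …, ∀ᶠ iₙ in U`, see
`eventually_powerUltrafilter_iff`. Its values on other sets are immaterial. -/
noncomputable def powerUltrafilter (I : Type*) [LinearOrder I] (U : Ultrafilter J) :
    Ultrafilter (I → J) :=
  (Ultrafilter.of Filter.atTop).bind fun D : Finset I =>
    iterateUltrafilter U D.sort fun _ => (Filter.nonempty_of_neBot (U : Filter J)).some

theorem eventually_powerUltrafilter_iff {S : (I → J) → Prop} {D : Finset I}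
    (hS : DependsOn S D) (s : I → J) :
    (∀ᶠ t in powerUltrafilter I U, S t) ↔ ∀ᶠ t in iterateUltrafilter U D.sort s, S t := by
  have hlarge : ∀ᶠ E : Finset I in (Ultrafilter.of Filter.atTop : Ultrafilter (Finset I)),
      ((∀ᶠ t in iterateUltrafilter U E.sort
          (fun _ => (Filter.nonempty_of_neBot (U : Filter J)).some), S t) ↔
        ∀ᶠ t in iterateUltrafilter U D.sort s, S t) := by
    filter_upwards [Ultrafilter.of_le _ (Filter.eventually_ge_atTop D)] with E hDE
    rw [← eventually_iterateUltrafilter_filter U hS, filter_mem_sort hDE]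
    exact eventually_iterateUltrafilter_congr_base U hS fun p hpD hp =>
      absurd ((D.mem_sort (· ≤ ·)).2 hpD) hp
  exact (Filter.eventually_congr hlarge).trans Filter.eventually_const

theorem eventually_powerUltrafilter_comp_orderIso {S : (I → J) → Prop} (hS : IsFinitary S)
    (e : I ≃o I) :
    (∀ᶠ t in powerUltrafilter I U, S (t ∘ e)) ↔ ∀ᶠ t in powerUltrafilter I U, S t := by
  obtain ⟨D, hD⟩ := hS
  obtain ⟨s⟩ : Nonempty (I → J) := Filter.nonempty_of_neBot (powerUltrafilter I U : Filter (I → J))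
  have hsort : (D.map e.toEquiv.toEmbedding).sort = D.sort.map e :=
    (D.map_sort e.toEquiv.toEmbedding (· ≤ ·) (· ≤ ·) fun _ _ _ _ => e.le_iff_le.symm).symm
  refine (eventually_powerUltrafilter_iff U (dependsOn_comp_equiv hD e.toEquiv) s).trans ?_
  rw [eventually_powerUltrafilter_iff U hD (s ∘ e), hsort]
  refine (eventually_iterateUltrafilter_map U e.toEquiv D.sort s).trans ?_
  exact Filter.eventually_congr (.of_forall fun t => by
    rw [Function.comp_assoc, Equiv.symm_comp_self, Function.comp_id])

theorem eventually_powerUltrafilter_apply (R : J → Prop) (p : I) :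
    (∀ᶠ t : I → J in powerUltrafilter I U, R (t p)) ↔ ∀ᶠ i in U, R i := by
  have hdep : DependsOn (fun t : I → J => R (t p)) ({p} : Finset I) :=
    fun _ _ hst => congrArg R (hst p (by simp))
  obtain ⟨s⟩ : Nonempty (I → J) := Filter.nonempty_of_neBot (powerUltrafilter I U : Filter (I → J))
  rw [eventually_powerUltrafilter_iff U hdep s]
  simp [eventually_iterateUltrafilter_cons, eventually_iterateUltrafilter_nil]

theorem eventually_powerUltrafilter_apply_apply (R : J → J → Prop) {p q : I} (hpq : p < q) :
    (∀ᶠ t : I → J in powerUltrafilter I U, R (t p) (t q)) ↔ ∀ᶠ i in U, ∀ᶠ j in U, R i j := by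
  have hdep : DependsOn (fun t : I → J => R (t p) (t q)) ({p, q} : Finset I) :=
    fun _ _ hst => congrArg₂ R (hst p (by simp)) (hst q (by simp))
  have hsort : ({p, q} : Finset I).sort = [p, q] := by
    rw [Finset.sort_insert _ (by simpa using hpq.le) (by simpa using hpq.ne), Finset.sort_singleton]
  obtain ⟨s⟩ : Nonempty (I → J) := Filter.nonempty_of_neBot (powerUltrafilter I U : Filter (I → J))
  rw [eventually_powerUltrafilter_iff U hdep s, hsort]
  simp [eventually_iterateUltrafilter_cons, eventually_iterateUltrafilter_nil, hpq.ne]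

end PowerUltrafilter

section ElementaryMaps

variable {L : FirstOrder.Language.{u, v}} {M N X : Type*} [L.Structure M] [L.Structure N]

theorem exists_equiv_of_surjective {m : X → M} {m' : X → N} (hm : m.Surjective)
    (hm' : m'.Surjective)
    (h : ∀ {n : ℕ} (φ : L.Formula (Fin n)) (x : Fin n → X),
      φ.Realize (m ∘ x) ↔ φ.Realize (m' ∘ x)) :
    ∃ e : M ≃[L] N, ∀ x, e (m x) = m' x := by
  have heq (x y : X) : m x = m y ↔ m' x = m' y := by
    simpa using h ((Term.var 0).equal (Term.var 1)) ![x, y]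
  let g : M → N := m' ∘ Function.surjInv hm
  have hg (x : X) : g (m x) = m' x := (heq _ _).1 (Function.surjInv_eq hm _)
  have hg_comp {n : ℕ} (x : Fin n → X) : g ∘ m ∘ x = m' ∘ x := funext fun i => hg (x i)
  have hg_bij : g.Bijective := by
    refine ⟨fun y₁ y₂ hy => ?_, fun y => (hm' y).elim fun x hx => ⟨m x, (hg x).trans hx⟩⟩
    simpa only [Function.surjInv_eq] using (heq _ _).2 hy
  refine ⟨⟨Equiv.ofBijective g hg_bij, fun F y => ?_, fun R y => ?_⟩, hg⟩
  · obtain ⟨x, rfl⟩ := hm.comp_left y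
    obtain ⟨z, hz⟩ := hm (funMap F (m ∘ x))
    have hgraph := h (Formula.graph F) (Fin.cons z x)
    rw [Fin.comp_cons, Fin.comp_cons, Formula.realize_graph, Formula.realize_graph] at hgraph
    change g (funMap F (m ∘ x)) = funMap F (g ∘ m ∘ x)
    rw [hg_comp, hgraph.1 hz.symm, ← hz, hg]
  · obtain ⟨x, rfl⟩ := hm.comp_left y
    change RelMap R (g ∘ m ∘ x) ↔ RelMap R (m ∘ x)
    rw [hg_comp]
    exact (h (R.formula fun i => Term.var i) x).symm

end ElementaryMaps

section Ultrapower

variable {L : FirstOrder.Language.{u, v}} {A : Type*} {K : Type*} [L.Structure K]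

/-- The ultrapower of `K` by the ultrafilter `W`. -/
abbrev Ultrapower (W : Ultrafilter A) (K : Type*) : Type _ :=
  (W : Filter A).Product fun _ => K

/-- The element of the ultrapower represented by `f`. -/
def ultrapowerMk (W : Ultrafilter A) (f : A → K) : Ultrapower W K :=
  Quotient.mk ((W : Filter A).productSetoid fun _ => K) f

theorem realize_snoc_ultrapowerMk [Nonempty K] (W : Ultrafilter A) {n : ℕ}
    (φ : L.BoundedFormula Empty (n + 1)) (f : Fin n → A → K) (g : A → K) :
    φ.Realize default (Fin.snoc (fun i => ultrapowerMk W (f i)) (ultrapowerMk W g) :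
        Fin (n + 1) → Ultrapower W K) ↔
      ∀ᶠ s in W, φ.Realize default (Fin.snoc (fun i => f i s) (g s) : Fin (n + 1) → K) := by
  have hsnoc : (Fin.snoc (fun i => ultrapowerMk W (f i)) (ultrapowerMk W g) :
      Fin (n + 1) → Ultrapower W K) =
        fun i => ultrapowerMk W ((Fin.snoc f g : Fin (n + 1) → A → K) i) := by
    refine funext (Fin.lastCases ?_ fun i => ?_) <;> simp
  have hsnoc' (s : A) : (Fin.snoc (fun i => f i s) (g s) : Fin (n + 1) → K) =
        fun i => (Fin.snoc f g : Fin (n + 1) → A → K) i s := by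
    refine funext (Fin.lastCases ?_ fun i => ?_) <;> simp
  rw [hsnoc, Subsingleton.elim default fun i : Empty => ultrapowerMk W i.elim]
  refine (Ultraproduct.boundedFormula_realize_cast φ (fun i => i.elim)
    (Fin.snoc f g : Fin (n + 1) → A → K)).trans (Filter.eventually_congr (.of_forall fun s => ?_))
  rw [hsnoc', Subsingleton.elim default fun i : Empty => (i.elim : A → K) s]

end Ultrapower

section IterUltrapower

variable (L : FirstOrder.Language.{u, v}) (K : Type*) [L.Structure K]
  (I : Type*) [LinearOrder I] {J : Type*} (U : Ultrafilter J)

/-- The iterated ultrapower of `K` by `U` along the linear order `I`: the elements of the ultrapower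
by `powerUltrafilter I U` that are represented by finitary functions. -/
noncomputable def iterUltrapower : L.Substructure (Ultrapower (powerUltrafilter I U) K) where
  carrier := {x | ∃ f : (I → J) → K, IsFinitary f ∧ ultrapowerMk _ f = x}
  fun_mem {n} F x hx := by
    choose f hf hfx using hx
    obtain rfl : (fun i => ultrapowerMk _ (f i)) = x := funext hfx
    exact ⟨fun s => funMap F fun i => f i s, (isFinitary_pi hf).comp_left (funMap F),
      (Ultraproduct.funMap_cast F f).symm⟩

variable {L K I U}

/-- The element of the iterated ultrapower represented by a finitary function. -/
noncomputable def iterUltrapowerMk (f : {f : (I → J) → K // IsFinitary f}) :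
    iterUltrapower L K I U :=
  ⟨ultrapowerMk _ f.1, f.1, f.2, rfl⟩

theorem iterUltrapowerMk_surjective :
    (iterUltrapowerMk : _ → iterUltrapower L K I U).Surjective := by
  rintro ⟨_, f, hf, rfl⟩
  exact ⟨⟨f, hf⟩, rfl⟩

theorem iterUltrapower_isElementary [Nonempty K] : (iterUltrapower L K I U).IsElementary := by
  refine Substructure.isElementary_of_exists _ fun n φ x y hy => ?_
  obtain ⟨f, rfl⟩ := iterUltrapowerMk_surjective.comp_left x
  obtain ⟨g, rfl⟩ := Quotient.exists_rep y
  have hwitness := (realize_snoc_ultrapowerMk _ φ (fun i => (f i).1) g).1 hy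
  let w (z : Fin n → K) : K :=
    Classical.epsilon fun y => φ.Realize default (Fin.snoc z y : Fin (n + 1) → K)
  refine ⟨iterUltrapowerMk ⟨fun s => w fun i => (f i).1 s,
    (isFinitary_pi fun i => (f i).2).comp_left w⟩, ?_⟩
  refine (realize_snoc_ultrapowerMk _ φ (fun i => (f i).1) _).2 (hwitness.mono fun s hs => ?_)
  exact Classical.epsilon_spec
    (p := fun y => φ.Realize default (Fin.snoc (fun i => (f i).1 s) y : Fin (n + 1) → K)) ⟨g s, hs⟩

theorem realize_iterUltrapowerMk [Nonempty K] {α : Type*} (φ : L.Formula α)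
    (f : α → {f : (I → J) → K // IsFinitary f}) :
    φ.Realize (fun i => (iterUltrapowerMk (f i) : iterUltrapower L K I U)) ↔
      ∀ᶠ s in powerUltrafilter I U, φ.Realize fun i => (f i).1 s :=
  ((ElementarySubstructure.mk _ iterUltrapower_isElementary).subtype.map_formula φ
      fun i => (iterUltrapowerMk (f i) : iterUltrapower L K I U)).symm.trans
    (Ultraproduct.realize_formula_cast (u := powerUltrafilter I U) φ fun i => (f i).1)

/-- The diagonal embedding of `K` into its iterated ultrapower. -/
noncomputable def iterUltrapowerDiag [Nonempty K] : K ↪ₑ[L] iterUltrapower L K I U where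
  toFun x := iterUltrapowerMk ⟨fun _ => x, isFinitary_const x⟩
  map_formula' _ φ x :=
    (realize_iterUltrapowerMk φ fun i => ⟨fun _ => x i, isFinitary_const (x i)⟩).trans
      (Filter.eventually_const (p := φ.Realize x))

/-- The tuple represented by `s ↦ a (s p)`: it realizes the limit along `U` of the types of the
tuples `a j`. -/
noncomputable def iterUltrapowerLimit {α : Type*} (a : J → α → K) (p : I) :
    α → iterUltrapower L K I U :=
  fun i => iterUltrapowerMk ⟨fun s => a (s p) i, (isFinitary_apply p).comp_left fun j => a j i⟩

section Realize

variable [Nonempty K] {α β : Type*} (φ : L.Formula (α ⊕ β))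

theorem realize_sumElim_iterUltrapowerMk (f : α → {f : (I → J) → K // IsFinitary f})
    (g : β → {f : (I → J) → K // IsFinitary f}) :
    φ.Realize (Sum.elim (fun i => iterUltrapowerMk (f i)) fun i => iterUltrapowerMk (g i) :
        _ → iterUltrapower L K I U) ↔
      ∀ᶠ s in powerUltrafilter I U,
        φ.Realize (Sum.elim (fun i => (f i).1 s) fun i => (g i).1 s) := by
  refine (iff_of_eq (congrArg φ.Realize (Sum.comp_elim iterUltrapowerMk f g).symm)).trans
    ((realize_iterUltrapowerMk φ (Sum.elim f g)).trans ?_)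
  exact Filter.eventually_congr (.of_forall fun s =>
    iff_of_eq (congrArg φ.Realize (Sum.comp_elim (fun h : {f // IsFinitary f} => h.1 s) f g)))

theorem realize_diag_limit (x : α → K) (b : J → β → K) (p : I) :
    φ.Realize (Sum.elim (iterUltrapowerDiag ∘ x) (iterUltrapowerLimit b p) :
        _ → iterUltrapower L K I U) ↔
      ∀ᶠ j in U, φ.Realize (Sum.elim x (b j)) :=
  (realize_sumElim_iterUltrapowerMk φ _ _).trans
    (eventually_powerUltrafilter_apply U (fun j => φ.Realize (Sum.elim x (b j))) p)

theorem realize_limit_diag (a : J → α → K) (y : β → K) (p : I) :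
    φ.Realize (Sum.elim (iterUltrapowerLimit a p) (iterUltrapowerDiag ∘ y) :
        _ → iterUltrapower L K I U) ↔
      ∀ᶠ i in U, φ.Realize (Sum.elim (a i) y) :=
  (realize_sumElim_iterUltrapowerMk φ _ _).trans
    (eventually_powerUltrafilter_apply U (fun i => φ.Realize (Sum.elim (a i) y)) p)

theorem realize_limit_limit (a : J → α → K) (b : J → β → K) {p q : I} (hpq : p < q) :
    φ.Realize (Sum.elim (iterUltrapowerLimit a p) (iterUltrapowerLimit b q) :
        _ → iterUltrapower L K I U) ↔
      ∀ᶠ i in U, ∀ᶠ j in U, φ.Realize (Sum.elim (a i) (b j)) :=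
  (realize_sumElim_iterUltrapowerMk φ _ _).trans
    (eventually_powerUltrafilter_apply_apply U (fun i j => φ.Realize (Sum.elim (a i) (b j))) hpq)

end Realize

theorem exists_iterUltrapower_equiv [Nonempty K] (σ : K ≃[L] K) (e : I ≃o I) :
    ∃ τ : iterUltrapower L K I U ≃[L] iterUltrapower L K I U,
      (∀ x, τ (iterUltrapowerDiag x) = iterUltrapowerDiag (σ x)) ∧
      ∀ {α : Type} (a : J → α → K) (p : I),
        τ ∘ iterUltrapowerLimit a p = iterUltrapowerLimit (fun j => σ ∘ a j) (e p) := by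
  let shift (f : {f : (I → J) → K // IsFinitary f}) : {f : (I → J) → K // IsFinitary f} :=
    ⟨fun s => σ (f.1 (s ∘ e)), (f.2.comp_equiv e.toEquiv).comp_left σ⟩
  have hshift : shift.Surjective := fun f => by
    refine ⟨⟨fun s => σ.symm (f.1 (s ∘ e.symm)),
      (f.2.comp_equiv e.symm.toEquiv).comp_left σ.symm⟩, Subtype.ext (funext fun s => ?_)⟩
    simp [shift, Function.comp_assoc, ← OrderIso.coe_trans]
  obtain ⟨τ, hτ⟩ := exists_equiv_of_surjective (L := L)
    (iterUltrapowerMk_surjective (L := L) (U := U))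
    ((iterUltrapowerMk_surjective (L := L) (U := U)).comp hshift) fun {n} φ f => by
      have hS : IsFinitary fun s => φ.Realize fun i => (f i).1 s :=
        (isFinitary_pi fun i => (f i).2).comp_left φ.Realize
      refine (realize_iterUltrapowerMk φ f).trans ?_
      rw [← eventually_powerUltrafilter_comp_orderIso U hS e]
      refine .trans ?_ (realize_iterUltrapowerMk φ (shift ∘ f)).symm
      exact Filter.eventually_congr (.of_forall fun s => (StrongHomClass.realize_formula σ φ).symm)
  exact ⟨τ, fun x => hτ ⟨_, isFinitary_const x⟩,
    fun a p => funext fun i => hτ ⟨_, (isFinitary_apply p).comp_left fun j => a j i⟩⟩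

end IterUltrapower

section SmallModel

variable {L : FirstOrder.Language.{u, v}} {M : Type*} [L.Structure M]

theorem exists_elementarilyEquivalent_realize_iff [Nonempty M] {ι : Type} (m : ι → M) :
    ∃ (K : Type max u v) (_ : L.Structure K), (M ≅[L] K) ∧
      ∃ b : ι → K, ∀ χ : L.Formula ι, χ.Realize b ↔ χ.Realize m := by
  obtain ⟨K, b, hb⟩ := (L.completeTheory M).exists_modelType_is_realized_in
    ((L.completeTheory M).typeOf m)
  refine ⟨K, inferInstance, ?_, b, fun χ => ?_⟩
  · exact elementarilyEquivalent_iff.2 fun χ => (realize_iff_of_model_completeTheory M K χ).symm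
  · rw [← Theory.CompleteType.formula_mem_typeOf (T := L.completeTheory M), hb,
      Theory.CompleteType.formula_mem_typeOf]

end SmallModel

section StrictOrder

variable {L : FirstOrder.Language.{u, v}} {M N : Type*} [L.Structure M] [L.Structure N] {α : Type*}

/-- The binary relation on `α`-tuples of elements of `M` defined by the formula `φ`. -/
def DefRel (φ : L.Formula (α ⊕ α)) (x y : α → M) : Prop :=
  φ.Realize (Sum.elim x y)

variable [Finite α]

/-- The sentence saying that `DefRel φ` is a strict partial order. -/
noncomputable def strictOrderSentence (φ : L.Formula (α ⊕ α)) : L.Sentence :=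
  Formula.iAlls α (φ.relabel (Sum.elim Sum.inr Sum.inr)).not ⊓
    Formula.iAlls (Fin 3 × α)
      ((φ.relabel (Sum.elim (fun i => Sum.inr (0, i)) fun i => Sum.inr (1, i))).imp
        ((φ.relabel (Sum.elim (fun i => Sum.inr (1, i)) fun i => Sum.inr (2, i))).imp
          (φ.relabel (Sum.elim (fun i => Sum.inr (0, i)) fun i => Sum.inr (2, i)))))

theorem realize_strictOrderSentence (φ : L.Formula (α ⊕ α)) :
    M ⊨ strictOrderSentence φ ↔ IsStrictOrder (α → M) (DefRel φ) := by
  have hirrefl : M ⊨ (Formula.iAlls α (φ.relabel (Sum.elim Sum.inr Sum.inr)).not : L.Sentence) ↔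
      ∀ x : α → M, ¬DefRel φ x x := by
    simp only [Sentence.Realize, Formula.realize_iAlls, Formula.realize_not,
      Formula.realize_relabel, Sum.comp_elim, DefRel]
    rfl
  have htrans : M ⊨ (Formula.iAlls (Fin 3 × α)
      ((φ.relabel (Sum.elim (fun i => Sum.inr (0, i)) fun i => Sum.inr (1, i))).imp
        ((φ.relabel (Sum.elim (fun i => Sum.inr (1, i)) fun i => Sum.inr (2, i))).imp
          (φ.relabel (Sum.elim (fun i => Sum.inr (0, i)) fun i => Sum.inr (2, i))))) :
            L.Sentence) ↔
      ∀ x y z : α → M, DefRel φ x y → DefRel φ y z → DefRel φ x z := by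
    simp only [Sentence.Realize, Formula.realize_iAlls, Formula.realize_imp,
      Formula.realize_relabel, Sum.comp_elim, DefRel]
    exact ⟨fun h x y z => h fun p => ![x, y, z] p.1 p.2, fun h w => h _ _ _⟩
  rw [strictOrderSentence, Sentence.Realize, Formula.realize_inf]
  refine (and_congr hirrefl htrans).trans ⟨fun h => ?_, fun h => ⟨h.irrefl, h.trans⟩⟩
  exact { irrefl := h.1, trans := h.2 }

theorem isStrictOrder_defRel_congr (h : M ≅[L] N) (φ : L.Formula (α ⊕ α)) :
    IsStrictOrder (α → M) (DefRel φ) ↔ IsStrictOrder (α → N) (DefRel φ) := by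
  rw [← realize_strictOrderSentence, ← realize_strictOrderSentence, h.realize_sentence]

end StrictOrder

section IsElemAlong

theorem defRel_onFormula {L L' : FirstOrder.Language} (ϕ : L →ᴸ L') {M : Type*} [L.Structure M]
    [L'.Structure M] [ϕ.IsExpansionOn M] {α : Type*} (φ : L.Formula (α ⊕ α)) :
    DefRel (M := M) (ϕ.onFormula φ) = DefRel φ :=
  funext₂ fun _ _ => propext (ϕ.realize_onFormula φ)

variable {L L' : FirstOrder.Language} {M N : Type*} [L'.Structure M] [L'.Structure N]

/-- An embedding of `L'`-structures is elementary along `ϕ : L →ᴸ L'` if it preserves the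
realization of all formulas in the image of `ϕ`, that is, if it is elementary for the `L`-reducts.
-/
def IsElemAlong (ϕ : L →ᴸ L') (f : M ↪[L'] N) : Prop :=
  ∀ {α : Type} {n : ℕ} (χ : L.BoundedFormula α n) (x : α → M) (y : Fin n → M),
    (ϕ.onBoundedFormula χ).Realize (f ∘ x) (f ∘ y) ↔ (ϕ.onBoundedFormula χ).Realize x y

variable {ϕ : L →ᴸ L'} {f : M ↪[L'] N}

theorem isElemAlong_of_isElem (hf : Embedding.IsElem f) : IsElemAlong ϕ f := fun χ x y =>
  (ElementaryEmbedding.mk f fun _ ψ z => hf ψ z).map_boundedFormula (ϕ.onBoundedFormula χ) x y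

theorem IsElemAlong.realize_formula (hf : IsElemAlong ϕ f) {α : Type} (χ : L.Formula α)
    (x : α → M) : (ϕ.onFormula χ).Realize (f ∘ x) ↔ (ϕ.onFormula χ).Realize x := by
  have h := hf χ x default
  rwa [Subsingleton.elim (f ∘ default) default] at h

theorem IsElemAlong.defRel_comp_iff (hf : IsElemAlong ϕ f) {α : Type} (φ : L.Formula (α ⊕ α))
    (x y : α → M) :
    DefRel (ϕ.onFormula φ) (f ∘ x) (f ∘ y) ↔ DefRel (ϕ.onFormula φ) x y := by
  rw [DefRel, DefRel, ← Sum.comp_elim, hf.realize_formula]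

theorem IsElemAlong.elementarilyEquivalent (hf : IsElemAlong ϕ f) :
    letI := ϕ.reduct M; letI := ϕ.reduct N; M ≅[L] N := by
  let := ϕ.reduct M
  let := ϕ.reduct N
  refine elementarilyEquivalent_iff.2 fun χ => ?_
  rw [← ϕ.realize_onSentence M, ← ϕ.realize_onSentence N, Sentence.Realize, Sentence.Realize,
    LHom.onSentence, ← hf.realize_formula, Subsingleton.elim (f ∘ default) default]

theorem IsElemAlong.isStrictOrder_defRel (hf : IsElemAlong ϕ f) {α : Type} [Finite α]
    (φ : L.Formula (α ⊕ α)) (h : IsStrictOrder (α → M) (DefRel (ϕ.onFormula φ))) :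
    IsStrictOrder (α → N) (DefRel (ϕ.onFormula φ)) := by
  let := ϕ.reduct M
  let := ϕ.reduct N
  rw [defRel_onFormula] at h ⊢
  exact (isStrictOrder_defRel_congr hf.elementarilyEquivalent φ).1 h

/-- A quantifier is handled by extending `f : M → N` to a chain `M → N → M' → N'` alternating
between the two classes, whose composites `M → M'` and `N → N'` are elementary along `ϕ`. -/
theorem isElemAlong_of_mutually_embeddable {A B : ∀ (M : Type w) [L'.Structure M], Prop}
    (hAB : ∀ (M : Type w) [L'.Structure M], A M →
      ∃ (N : Type w) (_ : L'.Structure N), B N ∧ Nonempty (M ↪[L'] N))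
    (hBA : ∀ (M : Type w) [L'.Structure M], B M →
      ∃ (N : Type w) (_ : L'.Structure N), A N ∧ Nonempty (M ↪[L'] N))
    (hA : ∀ (M N : Type w) [L'.Structure M] [L'.Structure N] (f : M ↪[L'] N),
      A M → A N → IsElemAlong ϕ f)
    (hB : ∀ (M N : Type w) [L'.Structure M] [L'.Structure N] (f : M ↪[L'] N),
      B M → B N → IsElemAlong ϕ f)
    {M N : Type w} [L'.Structure M] [L'.Structure N] (hM : A M) (hN : B N) (f : M ↪[L'] N) :
    IsElemAlong ϕ f := by
  intro α n χ
  induction χ generalizing M N with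
  | falsum => exact fun _ _ => Iff.rfl
  | equal t₁ t₂ =>
    exact fun x y => BoundedFormula.IsQF.realize_embedding (.of_isAtomic (.equal _ _)) f
  | rel R ts =>
    exact fun x y => BoundedFormula.IsQF.realize_embedding (.of_isAtomic (.rel _ _)) f
  | imp χ₁ χ₂ ih₁ ih₂ =>
    exact fun x y => imp_congr (ih₁ hM hN f x y) (ih₂ hM hN f x y)
  | all χ ih =>
    intro x y
    change (∀ b, _) ↔ ∀ a, _
    refine ⟨fun h a => ?_, fun h b => ?_⟩
    · rw [← ih hM hN f, Fin.comp_snoc]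
      exact h (f a)
    · obtain ⟨M', _, hM', ⟨g⟩⟩ := hBA N hN
      obtain ⟨N', _, hN', ⟨g'⟩⟩ := hAB M' hM'
      have hM'_all := (hA M M' (g.comp f) hM hM' (.all χ) x y).2 h (g b)
      rw [← hB N N' (g'.comp g) hN hN' χ]
      rw [← ih hM' hN' g'] at hM'_all
      simp only [Fin.comp_snoc] at hM'_all ⊢
      exact hM'_all

end IsElemAlong

section Expansion

variable {L : FirstOrder.Language.{u, v}}

/-- The interpretation of the unary function symbol by a given map. -/
abbrev unaryStructure {M : Type*} (τ : M → M) : unaryFunctionLanguage.Structure M where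
  funMap {n} := match n with
    | 0 => fun F => F.elim
    | 1 => fun _ x => τ (x 0)
    | _ + 2 => fun F => F.elim
  RelMap R := R.elim

/-- The inclusion of `L` into `L_σ`. -/
abbrev toLsigma (L : FirstOrder.Language.{u, v}) : L →ᴸ Lsigma L :=
  LHom.sumInl

variable {M N : Type*} [(Lsigma L).Structure M] [(Lsigma L).Structure N]

theorem funMap_inr_eq_sigmaMap (F : unaryFunctionLanguage.Functions 1) (x : Fin 1 → M) :
    funMap (L := Lsigma L) (Sum.inr F : L.Functions 1 ⊕ _) x = sigmaMap L M (x 0) :=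
  congrArg _ (funext (Fin.forall_fin_one.2 rfl))

theorem map_sigmaMap (f : M ↪[Lsigma L] N) (x : M) : f (sigmaMap L M x) = sigmaMap L N (f x) :=
  (f.map_fun (Sum.inr () : (Lsigma L).Functions 1) ![x]).trans (funMap_inr_eq_sigmaMap _ _)

theorem comp_sigmaMap_comp (f : M ↪[Lsigma L] N) {α : Type*} (x : α → M) :
    f ∘ sigmaMap L M ∘ x = sigmaMap L N ∘ f ∘ x :=
  funext fun i => map_sigmaMap f (x i)

/-- The term `σ t`. -/
def sigmaTerm {α : Type*} (t : (Lsigma L).Term α) : (Lsigma L).Term α :=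
  Functions.apply₁ (Sum.inr () : (Lsigma L).Functions 1) t

theorem realize_sigmaTerm {α : Type*} (t : (Lsigma L).Term α) (x : α → M) :
    (sigmaTerm t).realize x = sigmaMap L M (t.realize x) :=
  Term.realize_functions_apply₁

/-- The embedding of the `L`-reducts underlying an embedding of `L_σ`-structures. -/
def reductEmbedding (f : M ↪[Lsigma L] N) :
    letI := (toLsigma L).reduct M; letI := (toLsigma L).reduct N; M ↪[L] N :=
  letI := (toLsigma L).reduct M
  letI := (toLsigma L).reduct N
  { toFun := f
    inj' := f.injective
    map_fun' := fun F x => f.map_fun (Sum.inl F : (Lsigma L).Functions _) x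
    map_rel' := fun R x => f.map_rel (Sum.inl R : (Lsigma L).Relations _) x }

/-- The embedding of `L_σ`-structures given by an embedding of `L`-structures that commutes with
the interpretations of `σ`. -/
def expansionEmbedding {K : Type*} [L.Structure K] (τ : K → K)
    (j : letI := (toLsigma L).reduct M; M ↪[L] K) (hj : ∀ x, j (sigmaMap L M x) = τ (j x)) :
    letI := unaryStructure τ; M ↪[Lsigma L] K :=
  letI := (toLsigma L).reduct M
  letI := unaryStructure τ
  { toFun := j
    inj' := j.injective
    map_fun' := fun {n} F x => match n, F with
      | _, Sum.inl F => j.map_fun F x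
      | 1, Sum.inr F => (congrArg j (funMap_inr_eq_sigmaMap F x)).trans (hj (x 0))
    map_rel' := fun R x => match R with
      | Sum.inl R => j.map_rel R x }

/-- The formula `∃ z, x < z ∧ z < y ∧ σ z < z`, where `<` is the relation defined by `φ`. -/
noncomputable def descendsBetween {α : Type} [Finite α] (φ : L.Formula (α ⊕ α)) :
    (Lsigma L).Formula (α ⊕ α) :=
  Formula.iExs α
    (((toLsigma L).onFormula φ).relabel (Sum.elim (Sum.inl ∘ Sum.inl) Sum.inr) ⊓
      (((toLsigma L).onFormula φ).relabel (Sum.elim Sum.inr (Sum.inl ∘ Sum.inr)) ⊓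
        BoundedFormula.subst ((toLsigma L).onFormula φ)
          (Sum.elim (fun i => sigmaTerm (.var (Sum.inr i))) fun i => .var (Sum.inr i))))

theorem defRel_descendsBetween {α : Type} [Finite α] (φ : L.Formula (α ⊕ α)) (x y : α → M) :
    DefRel (descendsBetween φ) x y ↔ ∃ z : α → M,
      DefRel ((toLsigma L).onFormula φ) x z ∧ DefRel ((toLsigma L).onFormula φ) z y ∧
        DefRel ((toLsigma L).onFormula φ) (sigmaMap L M ∘ z) z := by
  simp only [DefRel, descendsBetween, Formula.realize_iExs, Formula.realize_inf,
    Formula.realize_relabel, Sum.comp_elim]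
  refine exists_congr fun z => and_congr Iff.rfl (and_congr Iff.rfl ?_)
  refine BoundedFormula.realize_subst.trans (iff_of_eq (congrArg (BoundedFormula.Realize _ · _) ?_))
  exact funext (Sum.rec (fun i => realize_sigmaTerm _ _) fun i => rfl)

end Expansion

section ModelsOfTsigma

variable {L : FirstOrder.Language.{u, v}} {T : L.Theory}

theorem isModelOfTsigma_unaryStructure {K : Type*} [L.Structure K] (hK : K ⊨ T) (τ : K ≃[L] K) :
    letI := unaryStructure τ; IsModelOfTsigma L T K :=
  ⟨hK, τ, rfl⟩

theorem realize_sigmaMap_comp {M : Type*} [(Lsigma L).Structure M] (hM : IsModelOfTsigma L T M)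
    {α : Type*} (χ : L.Formula α) (x : α → M) :
    ((toLsigma L).onFormula χ).Realize (sigmaMap L M ∘ x) ↔
      ((toLsigma L).onFormula χ).Realize x := by
  let := (toLsigma L).reduct M
  obtain ⟨-, e, he⟩ := hM
  rw [LHom.realize_onFormula, LHom.realize_onFormula, ← he, StrongHomClass.realize_formula e]

theorem isElemAlong_of_isModelOfTsigma (hmc : TheoryIsModelComplete L T) {M N : Type max u v}
    [(Lsigma L).Structure M] [(Lsigma L).Structure N] (f : M ↪[Lsigma L] N)
    (hM : IsModelOfTsigma L T M) (hN : IsModelOfTsigma L T N) :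
    IsElemAlong (toLsigma L) f := by
  let := (toLsigma L).reduct M
  let := (toLsigma L).reduct N
  intro α n χ x y
  rw [LHom.realize_onBoundedFormula, LHom.realize_onBoundedFormula]
  exact (ElementaryEmbedding.mk (reductEmbedding f) fun _ ψ z =>
    hmc M N hM.1 hN.1 (reductEmbedding f) ψ z).map_boundedFormula χ x y

variable {M : Type*} [(Lsigma L).Structure M] {α : Type} {φ : L.Formula (α ⊕ α)}

theorem defRel_sigmaMap_comp (hM : IsModelOfTsigma L T M) {x y : α → M} :
    DefRel ((toLsigma L).onFormula φ) (sigmaMap L M ∘ x) (sigmaMap L M ∘ y) ↔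
      DefRel ((toLsigma L).onFormula φ) x y := by
  rw [DefRel, DefRel, ← Sum.comp_elim, realize_sigmaMap_comp hM]

variable [IsTrans (α → M) (DefRel ((toLsigma L).onFormula φ))]

theorem defRel_iterate_sigmaMap (hM : IsModelOfTsigma L T M) {x : α → M}
    (hx : DefRel ((toLsigma L).onFormula φ) x (sigmaMap L M ∘ x)) {i j : ℕ} (hij : i < j) :
    DefRel ((toLsigma L).onFormula φ) ((sigmaMap L M ∘ ·)^[i] x) ((sigmaMap L M ∘ ·)^[j] x) := by
  refine Nat.rel_of_forall_rel_succ_of_lt _ (f := fun n => (sigmaMap L M ∘ ·)^[n] x)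
    (fun n => ?_) hij
  induction n with
  | zero => exact hx
  | succ n ih => simpa only [Function.iterate_succ_apply'] using (defRel_sigmaMap_comp hM).2 ih

theorem defRel_iterate_sigmaMap_of_descends (hM : IsModelOfTsigma L T M) {x z : α → M}
    (hxz : DefRel ((toLsigma L).onFormula φ) x z)
    (hz : DefRel ((toLsigma L).onFormula φ) (sigmaMap L M ∘ z) z) (n : ℕ) :
    DefRel ((toLsigma L).onFormula φ) ((sigmaMap L M ∘ ·)^[n] x) z := by
  induction n with
  | zero => exact hxz
  | succ n ih =>
    rw [Function.iterate_succ_apply']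
    exact _root_.trans ((defRel_sigmaMap_comp hM).2 ih) hz

theorem not_defRel_descendsBetween_iterate [Finite α] (hM : IsModelOfTsigma L T M)
    [Std.Irrefl (DefRel (M := M) ((toLsigma L).onFormula φ))] (x : α → M) (n : ℕ) :
    ¬DefRel (descendsBetween φ) x ((sigmaMap L M ∘ ·)^[n] x) := fun h => by
  obtain ⟨z, hxz, hzy, hz⟩ := (defRel_descendsBetween φ _ _).1 h
  exact irrefl z (_root_.trans hzy (defRel_iterate_sigmaMap_of_descends hM hxz hz n))

end ModelsOfTsigma

section ModelCompanion

variable {L : FirstOrder.Language.{u, v}} {T : L.Theory} {TA : (Lsigma L).Theory}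

/-- `TA` is a model companion of `T_σ`. All models live in `Type (max u v)`, as in
`TheoryIsModelComplete`. -/
structure IsModelCompanionOfTsigma (T : L.Theory) (TA : (Lsigma L).Theory) : Prop where
  modelComplete : TheoryIsModelComplete (Lsigma L) TA
  exists_embedding_model (M : Type max u v) [(Lsigma L).Structure M] : IsModelOfTsigma L T M →
    ∃ (N : Type max u v) (_ : (Lsigma L).Structure N), N ⊨ TA ∧ Nonempty (M ↪[Lsigma L] N)
  exists_embedding_isModelOfTsigma (M : Type max u v) [(Lsigma L).Structure M] : M ⊨ TA →
    ∃ (N : Type max u v) (_ : (Lsigma L).Structure N),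
      IsModelOfTsigma L T N ∧ Nonempty (M ↪[Lsigma L] N)

namespace IsModelCompanionOfTsigma

variable {N P : Type max u v} [(Lsigma L).Structure N] [(Lsigma L).Structure P]

theorem isElemAlong (hTA : IsModelCompanionOfTsigma T TA) (hmc : TheoryIsModelComplete L T)
    (hN : N ⊨ TA) (hP : IsModelOfTsigma L T P) (f : N ↪[Lsigma L] P) :
    IsElemAlong (toLsigma L) f :=
  isElemAlong_of_mutually_embeddable (A := fun M _ => M ⊨ TA)
    (B := fun M _ => IsModelOfTsigma L T M)
    hTA.exists_embedding_isModelOfTsigma hTA.exists_embedding_model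
    (fun M N _ _ f hM hN => isElemAlong_of_isElem (hTA.modelComplete M N hM hN f))
    (fun _ _ _ _ f hM hN => isElemAlong_of_isModelOfTsigma hmc f hM hN) hN hP f

theorem exists_embedding_isElem_comp (hTA : IsModelCompanionOfTsigma T TA) (hN : N ⊨ TA)
    (hP : IsModelOfTsigma L T P) (f : N ↪[Lsigma L] P) :
    ∃ (Q : Type max u v) (_ : (Lsigma L).Structure Q), Q ⊨ TA ∧
      ∃ g : P ↪[Lsigma L] Q, Embedding.IsElem (g.comp f) := by
  obtain ⟨Q, _, hQ, ⟨g⟩⟩ := hTA.exists_embedding_model P hP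
  exact ⟨Q, _, hQ, g, hTA.modelComplete N Q hN hQ (g.comp f)⟩

theorem sigmaMap_surjective (hTA : IsModelCompanionOfTsigma T TA) (hN : N ⊨ TA) :
    (sigmaMap L N).Surjective := by
  intro y
  obtain ⟨P, _, hP, ⟨f⟩⟩ := hTA.exists_embedding_isModelOfTsigma N hN
  obtain ⟨Q, _, -, g, hgf⟩ := hTA.exists_embedding_isElem_comp hN hP f
  let := (toLsigma L).reduct P
  obtain ⟨-, e, he⟩ := hP
  obtain ⟨p, hp⟩ := e.surjective (f y)
  let χ : (Lsigma L).Formula (Fin 1) := Formula.iExs (Fin 1)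
    ((sigmaTerm (.var (Sum.inr 0))).equal (.var (Sum.inl 0)))
  have hχ {M : Type max u v} [(Lsigma L).Structure M] (x : Fin 1 → M) :
      χ.Realize x ↔ ∃ z, sigmaMap L M z = x 0 := by
    simp only [χ, Formula.realize_iExs, Formula.realize_equal, realize_sigmaTerm, Term.realize_var,
      Sum.elim_inr, Sum.elim_inl]
    exact ⟨fun ⟨z, hz⟩ => ⟨z 0, hz⟩, fun ⟨z, hz⟩ => ⟨fun _ => z, hz⟩⟩
  refine (hχ ![y]).1 ((hgf χ ![y]).1 ((hχ _).2 ⟨g p, ?_⟩))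
  rw [← map_sigmaMap, ← he, hp]
  rfl

theorem isModelOfTsigma (hTA : IsModelCompanionOfTsigma T TA) (hmc : TheoryIsModelComplete L T)
    (hN : N ⊨ TA) : IsModelOfTsigma L T N := by
  obtain ⟨P, _, hP, ⟨f⟩⟩ := hTA.exists_embedding_isModelOfTsigma N hN
  have hf : IsElemAlong (toLsigma L) f := hTA.isElemAlong hmc hN hP f
  let := (toLsigma L).reduct N
  let := (toLsigma L).reduct P
  refine ⟨(hf.elementarilyEquivalent.theory_model_iff).2 hP.1, ?_⟩
  obtain ⟨e, he⟩ := exists_equiv_of_surjective (L := L) Function.surjective_id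
    (hTA.sigmaMap_surjective hN) fun χ x => by
      rw [← (toLsigma L).realize_onFormula, ← (toLsigma L).realize_onFormula,
        ← hf.realize_formula, ← hf.realize_formula, Function.id_comp, comp_sigmaMap_comp,
        realize_sigmaMap_comp hP]
  exact ⟨e, funext he⟩

end IsModelCompanionOfTsigma

end ModelCompanion

theorem eventually_lt_hyperfilter (i : ℕ) : ∀ᶠ j in (Filter.hyperfilter ℕ : Filter ℕ), i < j :=
  Nat.hyperfilter_le_atTop (Filter.eventually_gt_atTop i)

theorem exists_isModelOfTsigma_defRel_sigmaMap {L : FirstOrder.Language.{u, v}} {T : L.Theory}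
    {M : Type*} [L.Structure M] [Nonempty M] (hM : M ⊨ T) {α : Type} [Finite α]
    (φ : L.Formula (α ⊕ α)) (hφ : IsStrictOrder (α → M) (DefRel φ)) (a : ℕ → α → M)
    (ha : ∀ i j, i < j → DefRel φ (a i) (a j)) :
    ∃ (P : Type max u v) (_ : (Lsigma L).Structure P), IsModelOfTsigma L T P ∧
      IsStrictOrder (α → P) (DefRel ((toLsigma L).onFormula φ)) ∧
        ∃ c : α → P, DefRel ((toLsigma L).onFormula φ) c (sigmaMap L P ∘ c) := by
  obtain ⟨K, _, hMK, b, hb⟩ :=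
    exists_elementarilyEquivalent_realize_iff (L := L) fun p : ℕ × α => a p.1 p.2
  have : Nonempty K := hMK.nonempty_iff.1 inferInstance
  let b' (i : ℕ) (l : α) : K := b (i, l)
  have hb' (i j : ℕ) (hij : i < j) : DefRel φ (b' i) (b' j) := by
    have h := (hb (φ.relabel (Sum.elim (Prod.mk i) (Prod.mk j)))).2
    simp only [Formula.realize_relabel, Sum.comp_elim] at h
    exact h (ha i j hij)
  let U := Filter.hyperfilter ℕ
  have hMP : M ≅[L] iterUltrapower L K ℤ U := hMK.trans iterUltrapowerDiag.elementarilyEquivalent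
  obtain ⟨τ, -, hτ⟩ := exists_iterUltrapower_equiv (U := U) (.refl L K) (OrderIso.addRight (1 : ℤ))
  let := unaryStructure τ
  refine ⟨iterUltrapower L K ℤ U, inferInstance,
    isModelOfTsigma_unaryStructure (hMP.theory_model_iff.1 hM) τ, ?_, iterUltrapowerLimit b' 0, ?_⟩
  · rw [defRel_onFormula]
    exact (isStrictOrder_defRel_congr hMP φ).1 hφ
  · change DefRel _ _ (τ ∘ _)
    rw [defRel_onFormula, hτ]
    exact (realize_limit_limit φ _ _ (by simp)).2 (.of_forall fun i =>
      (eventually_lt_hyperfilter i).mono fun j => hb' i j)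

namespace IsModelCompanionOfTsigma

variable {L : FirstOrder.Language.{u, v}} {T : L.Theory} {TA : (Lsigma L).Theory}
  {N : Type max u v} [(Lsigma L).Structure N]
  {α : Type} [Finite α] {φ : L.Formula (α ⊕ α)}

theorem defRel_descendsBetween_of_embedding (hTA : IsModelCompanionOfTsigma T TA)
    (hmc : TheoryIsModelComplete L T) (hN : N ⊨ TA) {P : Type max u v} [(Lsigma L).Structure P]
    (hP : IsModelOfTsigma L T P) (f : N ↪[Lsigma L] P) {x y : α → N}
    (h : DefRel (descendsBetween φ) (f ∘ x) (f ∘ y)) : DefRel (descendsBetween φ) x y := by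
  obtain ⟨Q, _, hQ, g, hgf⟩ := hTA.exists_embedding_isElem_comp hN hP f
  have hg : IsElemAlong (toLsigma L) g :=
    isElemAlong_of_isModelOfTsigma hmc g hP (hTA.isModelOfTsigma hmc hQ)
  have hQ_descends : DefRel (descendsBetween φ) (g ∘ f ∘ x) (g ∘ f ∘ y) := by
    obtain ⟨z, hxz, hzy, hz⟩ := (defRel_descendsBetween φ _ _).1 h
    refine (defRel_descendsBetween φ _ _).2
      ⟨g ∘ z, (hg.defRel_comp_iff φ _ _).2 hxz, (hg.defRel_comp_iff φ _ _).2 hzy, ?_⟩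
    rwa [← comp_sigmaMap_comp, hg.defRel_comp_iff]
  rw [DefRel, ← Function.comp_assoc, ← Function.comp_assoc, ← Sum.comp_elim] at hQ_descends
  exact ((ElementaryEmbedding.mk (g.comp f) fun _ ψ w => hgf ψ w).map_formula _ _).1 hQ_descends

theorem defRel_descendsBetween_of_forall (hTA : IsModelCompanionOfTsigma T TA)
    (hmc : TheoryIsModelComplete L T) [Nonempty N] (hN : N ⊨ TA) {a : ℕ → α → N}
    (hσ : ∀ i, sigmaMap L N ∘ a i = a (i + 1))
    (ha : ∀ i j, i < j → DefRel ((toLsigma L).onFormula φ) (a i) (a j)) {y : α → N}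
    (hy : ∀ i, DefRel ((toLsigma L).onFormula φ) (a i) y) :
    DefRel (descendsBetween φ) (a 0) y := by
  have hN_Tsigma := hTA.isModelOfTsigma hmc hN
  let := (toLsigma L).reduct N
  obtain ⟨hNT, e, he⟩ := hN_Tsigma
  let U := Filter.hyperfilter ℕ
  let P := iterUltrapower L N ℤ U
  obtain ⟨τ, hτ_diag, hτ_limit⟩ :=
    exists_iterUltrapower_equiv (U := U) e (OrderIso.addRight (-1 : ℤ))
  let := unaryStructure τ
  have hP : IsModelOfTsigma L T P := isModelOfTsigma_unaryStructure
    (iterUltrapowerDiag.elementarilyEquivalent.theory_model_iff.1 hNT) τ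
  rw [defRel_onFormula] at ha hy
  refine hTA.defRel_descendsBetween_of_embedding hmc hN hP
    (expansionEmbedding τ iterUltrapowerDiag.toEmbedding fun x => ?_)
    ((defRel_descendsBetween φ _ _).2 ⟨iterUltrapowerLimit a 0, ?_, ?_, ?_⟩)
  · rw [← he]
    exact (hτ_diag x).symm
  · rw [defRel_onFormula]
    exact (realize_diag_limit φ _ _ _).2 ((eventually_lt_hyperfilter 0).mono fun j => ha 0 j)
  · rw [defRel_onFormula]
    exact (realize_limit_diag φ _ _ _).2 (.of_forall hy)
  · change DefRel _ (τ ∘ _) _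
    rw [defRel_onFormula, hτ_limit, he]
    simp only [hσ]
    exact (realize_limit_limit φ _ _ (by simp)).2 (.of_forall fun i =>
      (eventually_lt_hyperfilter (i + 1)).mono fun j => ha (i + 1) j)

theorem not_defRel_sigmaMap (hTA : IsModelCompanionOfTsigma T TA)
    (hmc : TheoryIsModelComplete L T) [Nonempty N] (hN : N ⊨ TA)
    (hφ : IsStrictOrder (α → N) (DefRel ((toLsigma L).onFormula φ))) (c : α → N) :
    ¬DefRel ((toLsigma L).onFormula φ) c (sigmaMap L N ∘ c) := by
  intro hc
  have hN_Tsigma := hTA.isModelOfTsigma hmc hN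
  let a (n : ℕ) : α → N := (sigmaMap L N ∘ ·)^[n] c
  have ha (i j : ℕ) (hij : i < j) : DefRel ((toLsigma L).onFormula φ) (a i) (a j) :=
    defRel_iterate_sigmaMap hN_Tsigma hc hij
  let U := Filter.hyperfilter ℕ
  let diag : N ↪ₑ[Lsigma L] iterUltrapower (Lsigma L) N Unit U := iterUltrapowerDiag
  have : Nonempty (iterUltrapower (Lsigma L) N Unit U) := ‹Nonempty N›.map diag
  have hlimit : DefRel (descendsBetween φ) (diag ∘ a 0)
      (iterUltrapowerLimit a () : α → iterUltrapower (Lsigma L) N Unit U) := by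
    refine hTA.defRel_descendsBetween_of_forall hmc (a := fun i => diag ∘ a i)
      (diag.elementarilyEquivalent.theory_model_iff.1 hN) (fun i => ?_) (fun i j hij => ?_)
      fun i => ?_
    · rw [show a (i + 1) = sigmaMap L N ∘ a i from Function.iterate_succ_apply' _ i c]
      exact (comp_sigmaMap_comp diag.toEmbedding (a i)).symm
    · rw [DefRel, ← Sum.comp_elim, diag.map_formula]
      exact ha i j hij
    · exact (realize_diag_limit _ _ _ _).2 ((eventually_lt_hyperfilter i).mono fun j => ha i j)
  obtain ⟨n, hn⟩ := ((realize_diag_limit _ _ _ _).1 hlimit).exists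
  exact not_defRel_descendsBetween_iterate hN_Tsigma c n hn

end IsModelCompanionOfTsigma

/-- Let `T` be a model complete `L`-theory.  If `T` has a model whose
complete theory has the strict order property (witnessed by a formula `φ` in two
`k`-tuples of variables defining a transitive irreflexive relation with an infinite
ascending chain), then `T_σ` has no model companion. -/
theorem stmt_0 (L : FirstOrder.Language.{u, v}) (T : L.Theory)
    (hmc : TheoryIsModelComplete L T)
    (M₀ : Type w) (_ : L.Structure M₀) (hM₀ : M₀ ⊨ T)
    (k : ℕ) (hk : 1 ≤ k) (φ : L.Formula (Fin k ⊕ Fin k))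
    (htrans : Transitive (fun x y : Fin k → M₀ => φ.Realize (Sum.elim x y)))
    (hirrefl : Irreflexive (fun x y : Fin k → M₀ => φ.Realize (Sum.elim x y)))
    (a : ℕ → Fin k → M₀)
    (hchain : ∀ i j : ℕ, i < j → φ.Realize (Sum.elim (a i) (a j))) :
    ¬ ∃ TA : (Lsigma L).Theory,
        TheoryIsModelComplete (Lsigma L) TA ∧
        (∀ (M : Type (max u v)) (_ : (Lsigma L).Structure M), IsModelOfTsigma L T M →
          ∃ (N : Type (max u v)) (_ : (Lsigma L).Structure N),
            N ⊨ TA ∧ Nonempty (M ↪[Lsigma L] N)) ∧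
        (∀ (M : Type (max u v)) (_ : (Lsigma L).Structure M), M ⊨ TA →
          ∃ (N : Type (max u v)) (_ : (Lsigma L).Structure N),
            IsModelOfTsigma L T N ∧ Nonempty (M ↪[Lsigma L] N)) := by
  rintro ⟨TA, hTA_mc, hTA_models, hTsigma_models⟩
  have hTA : IsModelCompanionOfTsigma T TA := ⟨hTA_mc, hTA_models, hTsigma_models⟩
  have : Nonempty M₀ := ⟨a 0 ⟨0, hk⟩⟩
  obtain ⟨P, _, hP, hφ, c, hc⟩ := exists_isModelOfTsigma_defRel_sigmaMap hM₀ φ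
    { irrefl := hirrefl, trans := fun _ _ _ => @htrans _ _ _ } a hchain
  obtain ⟨N, _, hN, ⟨f⟩⟩ := hTA.exists_embedding_model P hP
  have : Nonempty N := ⟨f (c ⟨0, hk⟩)⟩
  have hf : IsElemAlong (toLsigma L) f :=
    isElemAlong_of_isModelOfTsigma hmc f hP (hTA.isModelOfTsigma hmc hN)
  refine hTA.not_defRel_sigmaMap hmc hN (hf.isStrictOrder_defRel φ hφ) (f ∘ c) ?_
  rwa [← comp_sigmaMap_comp, hf.defRel_comp_iff]
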